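/- Let μ ∈ ℝ, set α := −iμ/2, and let u : ℝ → ℂ be a smooth solution of the PII equation u''(x) = x·u(x) + 2·u(x)³ − α on ℝ such that u(x) is purely imaginary for every x ∈ ℝ. Define w(x) := ∫₀ˣ exp( (2/3^{1/3}) ∫₀^y u(z/3^{1/3}) dz ) dy − C with C := (2·3^{1/3}/(1−iμ))·(u'(0) − u(0)²), g(x) := e^{iμ·ln|x|}·w(x)/x for x ≠ 0, and v(x) := (2/3^{1/3})·u(x/3^{1/3}). Then for every x ≠ 0 one has g'(x) = 3·x^{−2}·( v'(x) − v(x)²/2 )·w'(x)·e^{iμ·ln|x|}. -/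

import Mathlib

/-!
Write `β = 1 - iμ` and `c = cbrt3`. The product rule gives
`g'(x) = e^{iμ ln|x|} x⁻² (x w'(x) - β w(x))`, so the claim is the identity
`x w' - β w = 3 (v' - v²/2) w'`. After rescaling, the Painlevé equation reads
`3 v'' = x v + (3/2) v³ + iμ`, and `w'' = v w'`; with these two facts the difference of both sides
has derivative zero, so it is constant. It vanishes at `x = 0` exactly because of the choice of the
constant in `w`. This is `scaled_identity`.
-/

/-- The real cube root of 3. -/
noncomputable def cbrt3 : ℝ := (3 : ℝ) ^ ((1:ℝ)/3)

lemma cbrt3_pos : 0 < cbrt3 := by unfold cbrt3; positivity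

lemma cbrt3_cube : cbrt3 ^ 3 = 3 := by
  unfold cbrt3
  rw [← Real.rpow_natCast, ← Real.rpow_mul (by norm_num)]
  norm_num

/-- The first integral behind the formula for `g'`, stated for abstract `v`, `dv = v'`, `w`,
`e = w'` subject to the rescaled Painlevé equation and the matching initial condition at `0`. -/
lemma scaled_identity (μ : ℝ) (v dv w e : ℝ → ℂ)
    (hv : ∀ x, HasDerivAt v (dv x) x)
    (hdv : ∀ x : ℝ, HasDerivAt dv
      (((x : ℂ) * v x + 3 / 2 * v x ^ 3 + Complex.I * μ) / 3) x)
    (hw : ∀ x, HasDerivAt w (e x) x)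
    (he : ∀ x, HasDerivAt e (e x * v x) x)
    (h0 : -(1 - Complex.I * μ) * w 0 = 3 * (dv 0 - v 0 ^ 2 / 2) * e 0) (x : ℝ) :
    (x : ℂ) * e x - (1 - Complex.I * μ) * w x = 3 * (dv x - v x ^ 2 / 2) * e x := by
  let F : ℝ → ℂ := fun x =>
    (x : ℂ) * e x - (1 - Complex.I * μ) * w x - 3 * (dv x - v x ^ 2 / 2) * e x
  have hF : ∀ y, HasDerivAt F 0 y := by
    intro y
    have h1 : HasDerivAt (fun x : ℝ => (x : ℂ)) 1 y := Complex.ofRealCLM.hasDerivAt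
    have h2 := ((h1.mul (he y)).sub ((hw y).const_mul (1 - Complex.I * μ))).sub
      ((((hdv y).sub (((hv y).pow 2).div_const 2)).const_mul 3).mul (he y))
    refine h2.congr_deriv ?_
    simp only [Pi.sub_apply, Pi.pow_apply]
    push_cast
    ring
  have hc : F x = F 0 :=
    is_const_of_deriv_eq_zero (fun y => (hF y).differentiableAt) (fun y => (hF y).deriv) x 0
  simp only [F, Complex.ofReal_zero] at hc
  linear_combination hc + h0

/-- For `g(x) = e^{iμ ln|x|} w(x)/x` one has
`g'(x) = 3 x⁻² (v'(x) - v(x)²/2) w'(x) e^{iμ ln|x|}` for `x ≠ 0`. -/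
theorem stmt_3 (μ : ℝ) (α : ℂ) (hα : α = -Complex.I * μ / 2)
    (u : ℝ → ℂ) (hu : ContDiff ℝ (⊤ : ℕ∞) u)
    (hP : ∀ x : ℝ, deriv (deriv u) x = (x : ℂ) * u x + 2 * (u x) ^ 3 - α)
    (him : ∀ x : ℝ, (u x).re = 0)
    (Cc : ℂ)
    (hC : Cc = (2 * cbrt3 / (1 - Complex.I * μ)) * (deriv u 0 - (u 0) ^ 2))
    (w : ℝ → ℂ)
    (hw : ∀ x : ℝ, w x =
      (∫ y in (0:ℝ)..x, Complex.exp (((2 / cbrt3 : ℝ) : ℂ) *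
        ∫ z in (0:ℝ)..y, u (z / cbrt3))) - Cc)
    (g : ℝ → ℂ)
    (hg : ∀ x : ℝ, x ≠ 0 →
      g x = Complex.exp (Complex.I * μ * Real.log |x|) * w x / x)
    (v : ℝ → ℂ)
    (hv : ∀ x : ℝ, v x = ((2 / cbrt3 : ℝ) : ℂ) * u (x / cbrt3)) :
    ∀ x : ℝ, x ≠ 0 →
      deriv g x = 3 * (x : ℂ) ^ (-2 : ℤ) * (deriv v x - (v x) ^ 2 / 2) *
        deriv w x * Complex.exp (Complex.I * μ * Real.log |x|) := by
  have hc0 : (cbrt3 : ℂ) ≠ 0 := by exact_mod_cast cbrt3_pos.ne'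
  have hc3 : (cbrt3 : ℂ) ^ 3 = 3 := by exact_mod_cast cbrt3_cube
  have hβ : 1 - Complex.I * μ ≠ 0 := by
    intro h
    simpa using congrArg Complex.re h
  have hdu : ∀ x, HasDerivAt u (deriv u x) x := fun x =>
    ((hu.differentiable (by simp)) x).hasDerivAt
  have hu' : ContDiff ℝ (⊤ : ℕ∞) (deriv u) :=
    ((contDiff_infty_iff_deriv (𝕜 := ℝ)).1 hu).2
  have hddu : ∀ x, HasDerivAt (deriv u) (deriv (deriv u) x) x := fun x =>
    ((hu'.differentiable (by simp)) x).hasDerivAt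
  have hlin : ∀ x : ℝ, HasDerivAt (fun x : ℝ => x / cbrt3) (1 / cbrt3) x := fun x =>
    (hasDerivAt_id x).div_const cbrt3
  let dv : ℝ → ℂ := fun x => 2 / (cbrt3 : ℂ) ^ 2 * deriv u (x / cbrt3)
  have hdv : ∀ x, HasDerivAt v (dv x) x := by
    intro x
    have h := ((hdu (x / cbrt3)).scomp x (hlin x)).const_mul (((2 / cbrt3 : ℝ) : ℂ))
    rw [show v = _ from funext hv]
    refine h.congr_deriv ?_
    simp only [dv, Complex.real_smul]
    push_cast
    field_simp
  have hddv : ∀ x : ℝ, HasDerivAt dv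
      (((x : ℂ) * v x + 3 / 2 * v x ^ 3 + Complex.I * μ) / 3) x := by
    intro x
    have h := ((hddu (x / cbrt3)).scomp x (hlin x)).const_mul (2 / (cbrt3 : ℂ) ^ 2)
    refine h.congr_deriv ?_
    rw [hP, hv, hα, Complex.real_smul]
    push_cast
    -- Trading the literal `3` for `c ^ 3` makes this an identity of rational functions in `c`.
    rw [← hc3]
    field_simp
    ring
  let e : ℝ → ℂ := fun y => Complex.exp (((2 / cbrt3 : ℝ) : ℂ) *
        ∫ z in (0:ℝ)..y, u (z / cbrt3))
  have he : ∀ x, HasDerivAt e (e x * v x) x := by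
    intro x
    have hcont : Continuous fun z : ℝ => u (z / cbrt3) :=
      hu.continuous.comp (continuous_id.div_const _)
    have h := ((hcont.integral_hasStrictDerivAt 0 x).hasDerivAt.const_mul
      (((2 / cbrt3 : ℝ) : ℂ))).cexp
    rw [hv]
    exact h
  have hdw : ∀ x, HasDerivAt w (e x) x := by
    intro x
    have hcont : Continuous e :=
      continuous_iff_continuousAt.2 fun y => (he y).continuousAt
    rw [show w = _ from funext hw]
    exact (hcont.integral_hasStrictDerivAt 0 x).hasDerivAt.sub_const Cc
  have h0 : -(1 - Complex.I * μ) * w 0 = 3 * (dv 0 - v 0 ^ 2 / 2) * e 0 := by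
    have e0 : e 0 = 1 := by simp [e]
    rw [hw, hv, hC, e0]
    simp only [dv, intervalIntegral.integral_same, zero_div]
    push_cast
    rw [← hc3]
    field_simp
    ring
  intro x hx
  have key := scaled_identity μ v dv w e hdv hddv hdw he h0 x
  have hxc : (x : ℂ) ≠ 0 := by exact_mod_cast hx
  have hg' : g =ᶠ[nhds x] fun x : ℝ =>
      Complex.exp (Complex.I * μ * (Real.log x : ℝ)) * w x / x := by
    filter_upwards [isOpen_ne.mem_nhds hx] with y hy
    rw [hg y hy, Real.log_abs]
  have hlog : HasDerivAt (fun x : ℝ => ((Real.log x : ℝ) : ℂ)) ((x⁻¹ : ℝ) : ℂ) x :=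
    (Real.hasDerivAt_log hx).ofReal_comp
  have hid : HasDerivAt (fun x : ℝ => (x : ℂ)) 1 x := Complex.ofRealCLM.hasDerivAt
  have hder := (((hlog.const_mul (Complex.I * μ)).cexp).mul (hdw x)).div hid hxc
  rw [hg'.deriv_eq, (hdv x).deriv, (hdw x).deriv, Real.log_abs]
  refine hder.deriv.trans ?_
  simp only [Pi.mul_apply, zpow_neg]
  push_cast
  rw [show (x : ℂ) ^ (2 : ℤ) = (x : ℂ) ^ 2 from by norm_cast]
  field_simp
  linear_combination 2 * key
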